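/- Let G be a finite connected simple graph and suppose there is a vertex s of degree at least 2 in G such that the subgraph of G induced on V(G) ∖ {s} is 2-regular (every vertex other than s has exactly two neighbors other than s). Then DOM_t(G) = |V(G)| − 1; that is, there exists a valid orientation D of G with γ_t(D) = |V(G)| − 1, and every valid orientation D' of G satisfies γ_t(D') ≤ |V(G)| − 1. -/

import Mathlib

/-- A set `S` is a total dominating set of the digraph `D` (given as its arc
relation) if every vertex has an in-neighbor belonging to `S`. -/
def TotalDomSet {V : Type} (D : V → V → Prop) (S : Set V) : Prop :=
  ∀ v : V, ∃ u ∈ S, D u v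

/-- The total domination number of a digraph: the least cardinality of a total
dominating set. -/
noncomputable def totalDomNum {V : Type} (D : V → V → Prop) : ℕ :=
  sInf {n | ∃ S : Set V, TotalDomSet D S ∧ S.ncard = n}

/-- `D` is an orientation of the simple graph `G`: every arc of `D` lies on an
edge of `G`, and every edge of `G` carries exactly one of the two possible arcs. -/
def IsOrientation {V : Type} (G : SimpleGraph V) (D : V → V → Prop) : Prop :=
  (∀ u v : V, D u v → G.Adj u v) ∧ ∀ u v : V, G.Adj u v → (D u v ↔ ¬ D v u)

/-- An orientation (digraph) is valid if every vertex has at least one in-neighbor. -/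
def IsValidOrientation {V : Type} (D : V → V → Prop) : Prop :=
  ∀ v : V, ∃ u : V, D u v

/-- The upper orientable total domination number of `G`. -/
noncomputable def DOMt {V : Type} [Fintype V] (G : SimpleGraph V) : ℕ :=
  sSup {n | ∃ D : V → V → Prop, IsOrientation G D ∧ IsValidOrientation D ∧ totalDomNum D = n}

/-- The lower orientable total domination number of `G`. -/
noncomputable def domt {V : Type} [Fintype V] (G : SimpleGraph V) : ℕ :=
  sInf {n | ∃ D : V → V → Prop, IsOrientation G D ∧ IsValidOrientation D ∧ totalDomNum D = n}

/-!
Call `x` a private out-neighbor of `v` if `v` is its only in-neighbor. Every total dominating set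
contains each vertex that has a private out-neighbor, whereas a vertex of a valid digraph that has
none may be dropped from the set of all vertices. If no vertex can be dropped, then the arcs are
`u → σ u` for a permutation `σ`, which makes the underlying graph 2-regular; a neighbor of `s` has
degree at least three, and this gives the upper bound.

Conversely, Hall's theorem chooses distinct endpoints for the edges of a 2-regular graph. Pointing
each edge at its endpoint gives in-degrees at most one, hence out-degrees at least one, so every
vertex has a private out-neighbor. Doing this on `V ∖ {s}` and pointing all other edges at `s` keeps
these private out-neighbors, so `V ∖ {s}` is a minimum total dominating set.
-/

/-- `x` is a private out-neighbor of `v` in the digraph `D`: the vertex `v` is the one and only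
in-neighbor of `x`. These are the witnesses that `v` lies in every total dominating set. -/
def IsPrivateOutNeighbor {V : Type*} (D : V → V → Prop) (v x : V) : Prop :=
  ∀ u, D u x ↔ u = v

/-- The digraph obtained from a graph `H` by pointing every edge at its endpoint selected by `g`. -/
def selectedHeadDigraph {W : Type*} (H : SimpleGraph W) (g : H.edgeSet → W) (u v : W) : Prop :=
  ∃ e : H.edgeSet, (e : Sym2 W) = s(u, v) ∧ g e = v

/-- The extension of a digraph `E` on `T` to the vertices of `G`: edges of `G` leaving `T` are
pointed out of `T`, and edges of `G` outside `T` are pointed upwards in an arbitrary linear order,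
for which we take `WellOrderingRel`. -/
def outwardExtension {V : Type*} (G : SimpleGraph V) {T : Set V} (E : T → T → Prop) (u v : V) :
    Prop :=
  (∃ (hu : u ∈ T) (hv : v ∈ T), E ⟨u, hu⟩ ⟨v, hv⟩) ∨
    v ∉ T ∧ G.Adj u v ∧ (u ∈ T ∨ WellOrderingRel u v)

section TotalDomination

variable {V : Type} {D : V → V → Prop}

theorem totalDomNum_le_ncard {S : Set V} (hS : TotalDomSet D S) : totalDomNum D ≤ S.ncard :=
  Nat.sInf_le ⟨S, hS, rfl⟩

theorem TotalDomSet.mem_of_isPrivateOutNeighbor {S : Set V} {v x : V} (hS : TotalDomSet D S)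
    (hx : IsPrivateOutNeighbor D v x) : v ∈ S := by
  obtain ⟨u, huS, hux⟩ := hS x
  exact (hx u).1 hux ▸ huS

theorem totalDomNum_eq_ncard [Finite V] {S : Set V} (hS : TotalDomSet D S)
    (hpriv : ∀ v ∈ S, ∃ x, IsPrivateOutNeighbor D v x) : totalDomNum D = S.ncard := by
  refine le_antisymm (totalDomNum_le_ncard hS) (le_csInf ⟨_, S, hS, rfl⟩ ?_)
  rintro _ ⟨S', hS', rfl⟩
  refine Set.ncard_le_ncard fun v hv => ?_
  obtain ⟨x, hx⟩ := hpriv v hv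
  exact hS'.mem_of_isPrivateOutNeighbor hx

theorem IsValidOrientation.totalDomSet_compl_singleton (hval : IsValidOrientation D) {v : V}
    (hv : ∀ x, ¬ IsPrivateOutNeighbor D v x) : TotalDomSet D {v}ᶜ := by
  intro x
  by_contra! honly
  have heq : ∀ u, D u x → u = v := fun u hux => by_contra fun hne => honly u hne hux
  obtain ⟨w, hw⟩ := hval x
  exact hv x fun u => ⟨heq u, fun huv => huv.trans (heq w hw).symm ▸ hw⟩

end TotalDomination

section PermutationDigraph

theorem exists_perm_of_forall_exists_isPrivateOutNeighbor {α : Type*} [Finite α]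
    {D : α → α → Prop} (hpriv : ∀ v, ∃ x, IsPrivateOutNeighbor D v x) :
    ∃ σ : Equiv.Perm α, D = fun u v => σ u = v := by
  choose f hf using hpriv
  have hinj : f.Injective := fun v v' h => (hf v' v).1 (h ▸ (hf v v).2 rfl)
  let σ := Equiv.ofBijective f (Finite.injective_iff_bijective.1 hinj)
  refine ⟨σ, funext₂ fun u v => propext ?_⟩
  obtain ⟨w, rfl⟩ := σ.surjective v
  exact (hf w u).trans σ.injective.eq_iff.symm

theorem isPrivateOutNeighbor_perm {α : Type*} (σ : Equiv.Perm α) (v : α) :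
    IsPrivateOutNeighbor (fun u w => σ u = w) v (σ v) :=
  fun _ => σ.injective.eq_iff

variable {V : Type} {G : SimpleGraph V}

theorem ncard_neighborSet_eq_two_of_isOrientation_perm {σ : Equiv.Perm V}
    (hσ : IsOrientation G fun u v => σ u = v) (w : V) : (G.neighborSet w).ncard = 2 := by
  have hadj : ∀ u, G.Adj u (σ u) := fun u => hσ.1 u (σ u) rfl
  have hne : σ w ≠ σ.symm w := fun h =>
    (hσ.2 w (σ w) (hadj w)).1 rfl (σ.eq_symm_apply.1 h)
  refine Set.ncard_eq_two.2 ⟨σ w, σ.symm w, hne, Set.ext fun x => ⟨fun hx => ?_, ?_⟩⟩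
  · by_cases hwx : σ w = x
    · exact Or.inl hwx.symm
    · exact Or.inr (σ.eq_symm_apply.2 ((hσ.2 x w hx.symm).2 hwx))
  · rintro (rfl | rfl)
    · exact hadj w
    · simpa using (hadj (σ.symm w)).symm

theorem IsOrientation.totalDomNum_le_card_sub_one [Finite V] {D : V → V → Prop}
    (hD : IsOrientation G D) (hval : IsValidOrientation D) {w : V}
    (hw : (G.neighborSet w).ncard ≠ 2) : totalDomNum D ≤ Nat.card V - 1 := by
  obtain ⟨v, hv⟩ : ∃ v, ∀ x, ¬ IsPrivateOutNeighbor D v x := by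
    by_contra! hpriv
    obtain ⟨σ, rfl⟩ := exists_perm_of_forall_exists_isPrivateOutNeighbor hpriv
    exact hw (ncard_neighborSet_eq_two_of_isOrientation_perm hD w)
  calc totalDomNum D ≤ ({v}ᶜ : Set V).ncard :=
        totalDomNum_le_ncard (hval.totalDomSet_compl_singleton hv)
    _ = Nat.card V - 1 := by rw [Set.ncard_compl, Set.ncard_singleton]

end PermutationDigraph

section EndpointSelection

open Finset in
theorem exists_injective_mem_of_card_filter_le {ι α : Type*} [DecidableEq α] {t : ι → Finset α}
    {k : ℕ} (hk : 0 < k) (ht : ∀ i, k ≤ #(t i))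
    (hα : ∀ (A : Finset ι) (a : α), #{i ∈ A | a ∈ t i} ≤ k) :
    ∃ f : ι → α, f.Injective ∧ ∀ i, f i ∈ t i := by
  refine (all_card_le_biUnion_card_iff_exists_injective t).1 fun A => ?_
  refine Nat.le_of_mul_le_mul_right (card_mul_le_card_mul (fun i a => a ∈ t i) (fun i hi => ?_)
    fun a _ => hα A a) hk
  refine (ht i).trans (card_le_card fun a ha => ?_)
  exact mem_filter.2 ⟨mem_biUnion.2 ⟨i, hi, ha⟩, ha⟩

variable {W : Type*} {H : SimpleGraph W}

open Finset in
theorem exists_injective_endpoint (hH : ∀ v, (H.neighborSet v).encard ≤ 2) :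
    ∃ g : H.edgeSet → W, g.Injective ∧ ∀ e : H.edgeSet, g e ∈ (e : Sym2 W) := by
  classical
  have hcard : ∀ e : H.edgeSet, 2 ≤ #(e : Sym2 W).toFinset := fun e =>
    (Sym2.card_toFinset_of_not_isDiag _ (H.not_isDiag_of_mem_edgeSet e.2)).ge
  have hincident : ∀ (A : Finset H.edgeSet) (v : W),
      #(A.filter fun e : H.edgeSet => v ∈ (e : Sym2 W).toFinset) ≤ 2 := by
    intro A v
    rw [← Nat.cast_le (α := ℕ∞), ← Set.encard_coe_eq_coe_finsetCard]
    calc _ ≤ (H.incidenceSet v).encard :=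
          Set.encard_le_encard_of_injOn (f := Subtype.val)
            (fun e he => ⟨e.2, Sym2.mem_toFinset.1 (mem_filter.1 he).2⟩)
            Subtype.val_injective.injOn
      _ = (H.neighborSet v).encard := Set.encard_congr (H.incidenceSetEquivNeighborSet v)
      _ ≤ 2 := hH v
  obtain ⟨g, hinj, hmem⟩ := exists_injective_mem_of_card_filter_le two_pos hcard hincident
  exact ⟨g, hinj, fun e => Sym2.mem_toFinset.1 (hmem e)⟩

theorem leftUnique_selectedHeadDigraph {g : H.edgeSet → W} (hg : g.Injective) :
    Relator.LeftUnique (selectedHeadDigraph H g) := by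
  rintro u u' v ⟨e, he, hev⟩ ⟨e', he', hev'⟩
  have hedge : s(u, v) = s(u', v) := by rw [← he, ← he', hg (hev.trans hev'.symm)]
  exact Sym2.congr_left.1 hedge

end EndpointSelection

section TwoRegular

variable {W : Type} {H : SimpleGraph W}

theorem isOrientation_selectedHeadDigraph {g : H.edgeSet → W}
    (hg : ∀ e : H.edgeSet, g e ∈ (e : Sym2 W)) : IsOrientation H (selectedHeadDigraph H g) := by
  have harc : ∀ u v (h : H.Adj u v), selectedHeadDigraph H g u v ↔ g ⟨s(u, v), h⟩ = v :=
    fun u v h => ⟨fun ⟨e, he, hev⟩ => (Subtype.ext he : e = ⟨s(u, v), h⟩) ▸ hev,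
      fun hv => ⟨_, rfl, hv⟩⟩
  refine ⟨fun u v ⟨e, he, _⟩ => H.mem_edgeSet.1 (he ▸ e.2), fun u v h => ?_⟩
  have hswap : (⟨s(v, u), h.symm⟩ : H.edgeSet) = ⟨s(u, v), h⟩ := Subtype.ext Sym2.eq_swap
  rw [harc u v h, harc v u h.symm, hswap]
  have hend : g ⟨s(u, v), h⟩ = u ∨ g ⟨s(u, v), h⟩ = v := Sym2.mem_iff.1 (hg _)
  exact ⟨fun hv hu => h.ne (hu.symm.trans hv), hend.resolve_left⟩

theorem IsOrientation.exists_isPrivateOutNeighbor {D : W → W → Prop} (hD : IsOrientation H D)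
    (huniq : Relator.LeftUnique D) {v : W} (hv : (H.neighborSet v).Nontrivial) :
    ∃ x, IsPrivateOutNeighbor D v x := by
  obtain ⟨x, hvx⟩ : ∃ x, D v x := by
    by_contra! hnone
    obtain ⟨a, ha, b, hb, hab⟩ := hv
    exact hab (huniq ((hD.2 a v ha.symm).2 (hnone a)) ((hD.2 b v hb.symm).2 (hnone b)))
  exact ⟨x, fun u => ⟨fun hux => huniq hux hvx, fun huv => huv ▸ hvx⟩⟩

theorem exists_perm_isOrientation_of_ncard_neighborSet_eq_two [Finite W]
    (hH : ∀ v, (H.neighborSet v).ncard = 2) :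
    ∃ σ : Equiv.Perm W, IsOrientation H fun u v => σ u = v := by
  obtain ⟨g, hinj, hmem⟩ := exists_injective_endpoint (H := H) fun v => by
    rw [← Set.Finite.cast_ncard_eq (Set.toFinite _), hH v, Nat.cast_ofNat]
  have hD := isOrientation_selectedHeadDigraph hmem
  obtain ⟨σ, hσ⟩ := exists_perm_of_forall_exists_isPrivateOutNeighbor fun v =>
    hD.exists_isPrivateOutNeighbor (leftUnique_selectedHeadDigraph hinj)
      (Set.one_lt_ncard_iff_nontrivial.1 (by rw [hH v]; exact one_lt_two))
  exact ⟨σ, hσ ▸ hD⟩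

end TwoRegular

section OutwardExtension

variable {V : Type*} {G : SimpleGraph V} {T : Set V} {E : T → T → Prop}

theorem outwardExtension_of_mem {v : V} (hv : v ∈ T) (u : V) :
    outwardExtension G E u v ↔ ∃ hu : u ∈ T, E ⟨u, hu⟩ ⟨v, hv⟩ := by
  simp [outwardExtension, hv]

theorem outwardExtension_of_notMem {v : V} (hv : v ∉ T) (u : V) :
    outwardExtension G E u v ↔ G.Adj u v ∧ (u ∈ T ∨ WellOrderingRel u v) := by
  simp [outwardExtension, hv]

theorem IsPrivateOutNeighbor.outwardExtension {v x : T} (hx : IsPrivateOutNeighbor E v x) :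
    IsPrivateOutNeighbor (outwardExtension G E) (v : V) x := by
  intro u
  rw [outwardExtension_of_mem x.2]
  constructor
  · rintro ⟨hu, hux⟩
    exact congrArg Subtype.val ((hx _).1 hux)
  · rintro rfl
    exact ⟨v.2, (hx v).2 rfl⟩

theorem ncard_neighborSet_induce (v : T) :
    ((G.induce T).neighborSet v).ncard = (G.neighborSet v ∩ T).ncard := by
  rw [SimpleGraph.neighborSet_induce, ← Set.ncard_image_of_injective _ Subtype.val_injective,
    Subtype.image_preimage_coe, Set.inter_comm]

end OutwardExtension

section OrientationExtension

variable {V : Type} {G : SimpleGraph V} {T : Set V} {E : T → T → Prop}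

theorem IsOrientation.outwardExtension (hE : IsOrientation (G.induce T) E) :
    IsOrientation G (outwardExtension G E) := by
  constructor
  · rintro u v (⟨hu, hv, huv⟩ | ⟨-, huv, -⟩)
    · exact hE.1 _ _ huv
    · exact huv
  · intro u v h
    by_cases hu : u ∈ T <;> by_cases hv : v ∈ T
    · simpa [outwardExtension_of_mem, hu, hv] using hE.2 ⟨u, hu⟩ ⟨v, hv⟩ h
    · simp [outwardExtension_of_mem, outwardExtension_of_notMem, hu, hv, h]
    · simp [outwardExtension_of_mem, outwardExtension_of_notMem, hu, hv, h.symm]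
    · have hlt : WellOrderingRel u v ↔ ¬ WellOrderingRel v u :=
        ⟨fun huv => asymm huv,
          fun hvu => ((trichotomous_of WellOrderingRel u v).resolve_right
            (not_or.2 ⟨h.ne, hvu⟩))⟩
      simpa [outwardExtension_of_notMem, hu, hv, h, h.symm] using hlt

theorem IsValidOrientation.totalDomSet_outwardExtension (hE : IsValidOrientation E)
    (hT : ∀ v ∉ T, ∃ u ∈ T, G.Adj u v) : TotalDomSet (outwardExtension G E) T := by
  intro v
  by_cases hv : v ∈ T
  · obtain ⟨u, hu⟩ := hE ⟨v, hv⟩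
    exact ⟨u, u.2, (outwardExtension_of_mem hv u).2 ⟨u.2, hu⟩⟩
  · obtain ⟨u, hu, huv⟩ := hT v hv
    exact ⟨u, hu, (outwardExtension_of_notMem hv u).2 ⟨huv, Or.inl hu⟩⟩

theorem exists_orientation_totalDomNum_eq_ncard [Finite V]
    (hreg : ∀ v ∈ T, (G.neighborSet v ∩ T).ncard = 2) (hT : ∀ v ∉ T, ∃ u ∈ T, G.Adj u v) :
    ∃ D : V → V → Prop, IsOrientation G D ∧ IsValidOrientation D ∧ totalDomNum D = T.ncard := by
  obtain ⟨σ, hσ⟩ := exists_perm_isOrientation_of_ncard_neighborSet_eq_two (H := G.induce T)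
    fun v => (ncard_neighborSet_induce v).trans (hreg v v.2)
  have hval : IsValidOrientation fun u v => σ u = v := σ.surjective
  have hdom := hval.totalDomSet_outwardExtension hT
  refine ⟨_, hσ.outwardExtension, fun v => (hdom v).imp fun _ => And.right,
    totalDomNum_eq_ncard hdom fun v hv => ?_⟩
  exact ⟨_, (isPrivateOutNeighbor_perm σ ⟨v, hv⟩).outwardExtension⟩

end OrientationExtension

theorem stmt_10_general {V : Type} [Fintype V] (G : SimpleGraph V) (s : V)
    (hs : (G.neighborSet s).Nonempty)
    (hreg : ∀ v : V, v ≠ s → (G.neighborSet v \ {s}).ncard = 2) :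
    DOMt G = Fintype.card V - 1 ∧
      (∃ D : V → V → Prop, IsOrientation G D ∧ IsValidOrientation D ∧
        totalDomNum D = Fintype.card V - 1) ∧
      (∀ D : V → V → Prop, IsOrientation G D → IsValidOrientation D →
        totalDomNum D ≤ Fintype.card V - 1) := by
  obtain ⟨w, hw : G.Adj s w⟩ := hs
  have hdeg : 2 < (G.neighborSet w).ncard := by
    rw [← hreg w hw.ne']
    exact Set.ncard_sdiff_singleton_lt_of_mem hw.symm
  have hle : ∀ D : V → V → Prop, IsOrientation G D → IsValidOrientation D →
      totalDomNum D ≤ Fintype.card V - 1 := fun D hD hval => by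
    simpa using hD.totalDomNum_le_card_sub_one hval hdeg.ne'
  have hex := exists_orientation_totalDomNum_eq_ncard (G := G) (T := {s}ᶜ) hreg fun v hv =>
    ⟨w, hw.ne', by rwa [Set.notMem_compl_iff.1 hv, G.adj_comm]⟩
  rw [Set.ncard_compl, Set.ncard_singleton, Nat.card_eq_fintype_card] at hex
  refine ⟨IsGreatest.csSup_eq ⟨hex, ?_⟩, hex, hle⟩
  rintro _ ⟨D, hD, hval, rfl⟩
  exact hle D hD hval

/-- If `G` is connected, `s` has degree at least 2, and every other vertex has
exactly two neighbors other than `s` (the induced subgraph on `V ∖ {s}` is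
2-regular), then `DOM_t(G) = |V(G)| - 1`: some valid orientation attains
`|V(G)| - 1` and no valid orientation exceeds it. -/
theorem stmt_10 {V : Type} [Fintype V] (G : SimpleGraph V) (hconn : G.Connected)
    (s : V) (hs : 2 ≤ (G.neighborSet s).ncard)
    (hreg : ∀ v : V, v ≠ s → (G.neighborSet v \ {s}).ncard = 2) :
    DOMt G = Fintype.card V - 1 ∧
      (∃ D : V → V → Prop, IsOrientation G D ∧ IsValidOrientation D ∧
        totalDomNum D = Fintype.card V - 1) ∧
      (∀ D : V → V → Prop, IsOrientation G D → IsValidOrientation D →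
        totalDomNum D ≤ Fintype.card V - 1) :=
  stmt_10_general G s (Set.nonempty_of_ncard_ne_zero (by omega)) hreg
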